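/- Let X be a length space homeomorphic to a closed topological disk, and let {X_n} be a sequence of length spaces each homeomorphic to X. Suppose there exists an approximately isometric sequence f_n : X_n → X of topological embeddings. Then liminf_{n→∞} diam(∂X_n) ≥ diam(∂X). -/

import Mathlib

open Filter Metric
open scoped Topology ENNReal

/-!
STATEMENT 7: Lower semicontinuity of the boundary diameter.

Let `Y` be a length space homeomorphic to a closed topological disk and `Xₙ` length spaces
homeomorphic to `Y`, with an approximately isometric sequence of topological embeddings
`fₙ : Xₙ → Y`.  Then `liminf diam(∂Xₙ) ≥ diam(∂Y)`.  The manifold boundary of a space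
homeomorphic to the closed unit disk is the image of the unit circle under such a
homeomorphism (independent of the homeomorphism chosen), and we record homeomorphisms
`Φ : closed disk ≃ₜ Y` and `Φₙ : closed disk ≃ₜ Xₙ` explicitly; diameters are taken in
`[0,∞]` (`EMetric.diam`).
-/

/-- `f` is an `ε`-isometry: `f X` is `ε`-dense and `f` distorts distances by less than `ε`. -/
def IsEpsIsometry {X Y : Type*} [MetricSpace X] [MetricSpace Y] (ε : ℝ) (f : X → Y) : Prop :=
  (∀ y : Y, ∃ x : X, dist y (f x) < ε) ∧ ∀ x x' : X, |dist x x' - dist (f x) (f x')| < ε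

/-- A curve in a metric space: a continuous map on a compact interval. -/
structure Curve (X : Type*) [MetricSpace X] where
  a : ℝ
  b : ℝ
  hab : a ≤ b
  toFun : ℝ → X
  cont : ContinuousOn toFun (Set.Icc a b)

/-- The length of a curve: the total variation of its parametrization. -/
noncomputable def Curve.length {X : Type*} [MetricSpace X] (γ : Curve X) : ℝ≥0∞ :=
  eVariationOn γ.toFun (Set.Icc γ.a γ.b)

/-- A length space: the distance between any two points is the infimum of the lengths
of curves joining them. -/
def IsLengthSpace (X : Type*) [MetricSpace X] : Prop :=
  ∀ x y : X, edist x y =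
    ⨅ γ : {γ : Curve X // γ.toFun γ.a = x ∧ γ.toFun γ.b = y}, γ.1.length

/-- The unit circle, as a subset of the closed unit disk in `ℂ`. -/
def diskBoundary : Set ↥(Metric.closedBall (0 : ℂ) 1) :=
  {x : ↥(Metric.closedBall (0 : ℂ) 1) | ‖(x : ℂ)‖ = 1}

/-!
If `f : X → Y` is an injective continuous map between topological disks, invariance of domain
shows that `f` maps the interior of `X` to interior points of `f X` lying off `∂Y`. Hence
`f x ∈ ∂Y` forces `x ∈ ∂X`, and the frontier of `f X` lies in `f (∂X)`. Let `p ∈ ∂Y` and suppose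
that `f X` is `ε`-dense. If `p ∈ f X` then `p ∈ f (∂X)`; otherwise the ball of radius `ε` about
`p`, which is connected because `Y` is a length space, meets both `f X` and its complement, hence
also `f (∂X)`. So `∂Y` is in the `ε`-neighbourhood of `f (∂X)`, and `diam ∂Y ≤ diam ∂X + 3ε`.

Invariance of domain comes from covering space theory. If an injective `g` on the closed unit disk
omits values arbitrarily close to `g 0`, then `g x - g 0` is homotopic on the unit circle to
a constant through nonvanishing functions, so it has a continuous logarithm. But through
`g x - g (-t x)` it is also homotopic to the odd function `g x - g (-x)`, which has none.
-/

section ContinuousLog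

variable {A : Type*} [TopologicalSpace A] {u : A → ℂ}

/-- `u` has a continuous logarithm: it lifts through `Complex.exp`. On the circle this says that
`u` is nonvanishing with winding number zero, which is how it is used here. -/
def HasContinuousLog (u : A → ℂ) : Prop :=
  ∃ L : A → ℂ, Continuous L ∧ ∀ a, Complex.exp (L a) = u a

theorem hasContinuousLog_const {c : ℂ} (hc : c ≠ 0) : HasContinuousLog fun _ : A ↦ c :=
  ⟨fun _ ↦ Complex.log c, continuous_const, fun _ ↦ Complex.exp_log hc⟩

theorem HasContinuousLog.of_homotopy {H : unitInterval × A → ℂ} (hH : Continuous H)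
    (hH₀ : ∀ p, H p ≠ 0) (h : HasContinuousLog fun a ↦ H (0, a)) :
    HasContinuousLog fun a ↦ H (1, a) := by
  obtain ⟨L, hL, hexp⟩ := h
  let H' : C(unitInterval × A, {z : ℂ // z ≠ 0}) := ⟨fun p ↦ ⟨H p, hH₀ p⟩, by fun_prop⟩
  have hstart (a : A) : H' (0, a) = ⟨Complex.exp (L a), Complex.exp_ne_zero _⟩ :=
    Subtype.ext (hexp a).symm
  let G := Complex.isCoveringMap_exp.liftHomotopy H' ⟨L, hL⟩ hstart
  have hG := Complex.isCoveringMap_exp.liftHomotopy_lifts H' ⟨L, hL⟩ hstart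
  exact ⟨fun a ↦ G (1, a), by fun_prop, fun a ↦ congrArg Subtype.val (congrFun hG (1, a))⟩

theorem HasContinuousLog.sub_of_segment (hu : Continuous u) {c d : ℂ}
    (hcd : ∀ a, u a ∉ segment ℝ c d) (h : HasContinuousLog fun a ↦ u a - c) :
    HasContinuousLog fun a ↦ u a - d := by
  have hline : Continuous fun p : unitInterval × A ↦ AffineMap.lineMap (k := ℝ) c d (p.1 : ℝ) := by
    fun_prop
  have hne (p : unitInterval × A) : u p.2 - AffineMap.lineMap (k := ℝ) c d (p.1 : ℝ) ≠ 0 := by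
    refine sub_ne_zero.2 fun heq ↦ hcd p.2 ?_
    rw [heq, segment_eq_image_lineMap]
    exact Set.mem_image_of_mem _ p.1.2
  simpa using
    HasContinuousLog.of_homotopy ((hu.comp continuous_snd).sub hline) hne (by simpa using h)

theorem exists_eq_zero_of_odd [Neg A] [ConnectedSpace A] {f : A → ℝ}
    (hf : Continuous f) (hodd : Function.Odd f) : ∃ a, f a = 0 := by
  obtain ⟨a⟩ := (inferInstance : Nonempty A)
  apply mem_range_of_exists_le_of_exists_ge hf
  · rcases le_total (f a) 0 with h | h
    · exact ⟨a, h⟩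
    · exact ⟨-a, by simpa [hodd a] using h⟩
  · rcases le_total 0 (f a) with h | h
    · exact ⟨a, h⟩
    · exact ⟨-a, by simpa [hodd a] using h⟩

theorem not_hasContinuousLog_of_odd [InvolutiveNeg A] [ContinuousNeg A] [ConnectedSpace A]
    (hodd : Function.Odd u) : ¬ HasContinuousLog u := by
  rintro ⟨L, hL, hexp⟩
  have hjump (a : A) : Complex.exp (L (-a) - L a) = -1 := by
    rw [Complex.exp_sub, hexp, hexp, hodd a, neg_div, div_self (hexp a ▸ Complex.exp_ne_zero _)]
  obtain ⟨a, ha⟩ : ∃ a, (L (-a) - L a).im = 0 :=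
    exists_eq_zero_of_odd (by fun_prop) fun a ↦ by simp
  have hreal : Real.exp (L (-a) - L a).re = -1 := by
    simpa [Complex.exp_re, ha] using congrArg Complex.re (hjump a)
  linarith [Real.exp_pos (L (-a) - L a).re]

end ContinuousLog

section InvarianceOfDomain

variable {E : Type*} [NormedAddCommGroup E] [NormedSpace ℝ E]

theorem hasContinuousLog_sphere {u : E → ℂ} (hu : ContinuousOn u (closedBall 0 1))
    (hu₀ : ∀ x ∈ closedBall (0 : E) 1, u x ≠ 0) :
    HasContinuousLog fun x : sphere (0 : E) 1 ↦ u x := by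
  have hmem (p : unitInterval × sphere (0 : E) 1) :
      (p.1 : ℝ) • (p.2 : E) ∈ closedBall (0 : E) 1 :=
    (convex_closedBall 0 1).smul_mem_of_zero_mem (mem_closedBall_self zero_le_one)
      (sphere_subset_closedBall p.2.2) p.1.2
  simpa using HasContinuousLog.of_homotopy (hu.comp_continuous (by fun_prop) hmem)
    (fun p ↦ hu₀ _ (hmem p))
    (by simpa using hasContinuousLog_const (hu₀ 0 (mem_closedBall_self zero_le_one)))

theorem not_hasContinuousLog_sub_map_zero (hE : 1 < Module.rank ℝ E) {g : E → ℂ}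
    (hg : ContinuousOn g (closedBall 0 1)) (hinj : Set.InjOn g (closedBall 0 1)) :
    ¬ HasContinuousLog fun x : sphere (0 : E) 1 ↦ g x - g 0 := by
  intro h
  have hmem (x : sphere (0 : E) 1) : (x : E) ∈ closedBall (0 : E) 1 :=
    sphere_subset_closedBall x.2
  have hmem' (p : unitInterval × sphere (0 : E) 1) :
      (p.1 : ℝ) • -(p.2 : E) ∈ closedBall (0 : E) 1 :=
    (convex_closedBall 0 1).smul_mem_of_zero_mem (mem_closedBall_self zero_le_one)
      (hmem (-p.2)) p.1.2
  have hne (p : unitInterval × sphere (0 : E) 1) :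
      g (p.2 : E) - g ((p.1 : ℝ) • -(p.2 : E)) ≠ 0 := by
    refine sub_ne_zero.2 fun heq ↦ ?_
    have hsmul : (1 + (p.1 : ℝ)) • (p.2 : E) = 0 := by
      rw [add_smul, one_smul, ← sub_neg_eq_add, ← smul_neg, sub_eq_zero]
      exact hinj (hmem p.2) (hmem' p) heq
    rcases smul_eq_zero.1 hsmul with h0 | h0
    · linarith [p.1.2.1]
    · exact ne_zero_of_mem_unit_sphere p.2 h0
  have : ConnectedSpace (sphere (0 : E) 1) :=
    isConnected_iff_connectedSpace.1 (isConnected_sphere hE 0 zero_le_one)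
  have hcont : Continuous fun p : unitInterval × sphere (0 : E) 1 ↦ g (p.2 : E) :=
    hg.comp_continuous (by fun_prop) fun p ↦ hmem p.2
  have hcont' : Continuous fun p : unitInterval × sphere (0 : E) 1 ↦
      g ((p.1 : ℝ) • -(p.2 : E)) :=
    hg.comp_continuous (by fun_prop) hmem'
  have hodd : Function.Odd fun x : sphere (0 : E) 1 ↦ g x - g (-x) := fun x ↦ by simp
  exact not_hasContinuousLog_of_odd hodd
    (by simpa using HasContinuousLog.of_homotopy (hcont.sub hcont') hne (by simpa using h))

theorem image_closedBall_mem_nhds {g : ℂ → ℂ} (hg : ContinuousOn g (closedBall 0 1))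
    (hinj : Set.InjOn g (closedBall 0 1)) : g '' closedBall 0 1 ∈ 𝓝 (g 0) := by
  by_contra hnhds
  have hgS : ContinuousOn g (sphere 0 1) := hg.mono sphere_subset_closedBall
  have hclosed : IsClosed (g '' sphere 0 1) :=
    ((isCompact_sphere (0 : ℂ) 1).image_of_continuousOn hgS).isClosed
  have hcenter : g 0 ∉ g '' sphere 0 1 := by
    rw [hinj.mem_image_iff sphere_subset_closedBall (mem_closedBall_self zero_le_one)]
    simp
  obtain ⟨δ, hδ, hball⟩ := Metric.isOpen_iff.1 hclosed.isOpen_compl _ hcenter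
  obtain ⟨c, hcδ, hc⟩ : ∃ c ∈ ball (g 0) δ, c ∉ g '' closedBall 0 1 :=
    Set.not_subset.1 fun hsub ↦ hnhds (mem_of_superset (ball_mem_nhds _ hδ) hsub)
  have hseg (x : sphere (0 : ℂ) 1) : g x ∉ segment ℝ c (g 0) := fun hx ↦
    hball ((convex_ball _ _).segment_subset hcδ (mem_ball_self hδ) hx)
      (Set.mem_image_of_mem g x.2)
  have hlog : HasContinuousLog fun x : sphere (0 : ℂ) 1 ↦ g x - c :=
    hasContinuousLog_sphere (hg.sub continuousOn_const) fun x hx heq ↦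
      hc ⟨x, hx, sub_eq_zero.1 heq⟩
  exact not_hasContinuousLog_sub_map_zero (by simp) hg hinj
    (hlog.sub_of_segment hgS.domRestrict hseg)

theorem image_mem_nhds_of_injOn {s : Set ℂ} {g : ℂ → ℂ} (hg : ContinuousOn g s)
    (hinj : Set.InjOn g s) {z : ℂ} (hs : s ∈ 𝓝 z) : g '' s ∈ 𝓝 (g z) := by
  obtain ⟨r, hr, hrs⟩ := nhds_basis_closedBall.mem_iff.1 hs
  have hmaps : Set.MapsTo (fun w : ℂ ↦ z + r * w) (closedBall 0 1) s := by
    intro w hw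
    refine hrs ?_
    simpa [abs_of_pos hr, hr] using hw
  have hinj' : Function.Injective fun w : ℂ ↦ z + r * w := fun a b hab ↦ by
    simpa [hr.ne'] using hab
  have himage : g '' ((fun w : ℂ ↦ z + r * w) '' closedBall 0 1) ∈ 𝓝 (g z) := by
    simpa [Set.image_image] using image_closedBall_mem_nhds
      (hg.comp (by fun_prop) hmaps) (hinj.comp hinj'.injOn hmaps)
  exact mem_of_superset himage (Set.image_mono hmaps.image_subset)

theorem range_mem_nhds_of_injective {s : Set ℂ} {g : s → ℂ} (hg : Continuous g)
    (hinj : Function.Injective g) {z : s} (hs : s ∈ 𝓝 (z : ℂ)) : Set.range g ∈ 𝓝 (g z) := by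
  have hext (w : s) : Function.extend Subtype.val g 0 (w : ℂ) = g w :=
    Subtype.val_injective.extend_apply g 0 w
  have hrestrict : s.domRestrict (Function.extend Subtype.val g 0) = g := funext hext
  have hcont : ContinuousOn (Function.extend Subtype.val g 0) s := by
    rwa [continuousOn_iff_continuous_domRestrict, hrestrict]
  have hinjOn : Set.InjOn (Function.extend Subtype.val g 0) s := by
    rwa [Set.injOn_iff_injective, hrestrict]
  simpa only [← Set.range_domRestrict, hrestrict, hext] using
    image_mem_nhds_of_injOn hcont hinjOn hs

end InvarianceOfDomain

section DiskBoundary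

variable {X Y : Type*} [TopologicalSpace X] [TopologicalSpace Y]
  {F : closedBall (0 : ℂ) 1 → closedBall (0 : ℂ) 1} {z : closedBall (0 : ℂ) 1} {f : X → Y}

theorem notMem_diskBoundary_iff : z ∉ diskBoundary ↔ closedBall (0 : ℂ) 1 ∈ 𝓝 (z : ℂ) := by
  rw [← mem_interior_iff_mem_nhds, interior_closedBall _ one_ne_zero, mem_ball_zero_iff,
    lt_iff_le_and_ne]
  exact (and_iff_right (mem_closedBall_zero_iff.1 z.2)).symm

theorem range_mem_nhds_of_notMem_diskBoundary (hF : Continuous F) (hinj : Function.Injective F)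
    (hz : z ∉ diskBoundary) : Set.range F ∈ 𝓝 (F z) := by
  have hval : Set.range (fun w ↦ (F w : ℂ)) ∈ 𝓝 (F z : ℂ) :=
    range_mem_nhds_of_injective (by fun_prop) (Subtype.val_injective.comp hinj)
      (notMem_diskBoundary_iff.1 hz)
  rw [nhds_subtype_eq_comap]
  refine ⟨_, hval, ?_⟩
  rintro _ ⟨w, hw⟩
  exact ⟨w, Subtype.ext hw⟩

theorem map_notMem_diskBoundary (hF : Continuous F) (hinj : Function.Injective F)
    (hz : z ∉ diskBoundary) : F z ∉ diskBoundary := by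
  refine notMem_diskBoundary_iff.2 (mem_of_superset (range_mem_nhds_of_injective
    (continuous_subtype_val.comp hF) (Subtype.val_injective.comp hinj)
    (notMem_diskBoundary_iff.1 hz)) ?_)
  rintro _ ⟨w, rfl⟩
  exact (F w).2

theorem mem_image_diskBoundary_of_map_mem (Φ : closedBall (0 : ℂ) 1 ≃ₜ Y)
    (Ψ : closedBall (0 : ℂ) 1 ≃ₜ X) (hf : Continuous f) (hinj : Function.Injective f) {x : X}
    (hx : f x ∈ Φ '' diskBoundary) : x ∈ Ψ '' diskBoundary := by
  obtain ⟨w, hw, hwx⟩ := hx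
  obtain ⟨z, rfl⟩ := Ψ.surjective x
  refine Set.mem_image_of_mem Ψ (not_not.1 fun hz ↦ ?_)
  refine map_notMem_diskBoundary (F := Φ.symm ∘ f ∘ Ψ) (by fun_prop)
    (Φ.symm.injective.comp (hinj.comp Ψ.injective)) hz ?_
  rwa [Function.comp_apply, Function.comp_apply, ← hwx, Φ.symm_apply_apply]

theorem range_mem_nhds_of_notMem_image_diskBoundary (Φ : closedBall (0 : ℂ) 1 ≃ₜ Y)
    (Ψ : closedBall (0 : ℂ) 1 ≃ₜ X) (hf : Continuous f) (hinj : Function.Injective f) {x : X}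
    (hx : x ∉ Ψ '' diskBoundary) : Set.range f ∈ 𝓝 (f x) := by
  obtain ⟨z, rfl⟩ := Ψ.surjective x
  have hz : z ∉ diskBoundary := by rwa [Ψ.injective.mem_set_image] at hx
  have hrange : Set.range (Φ.symm ∘ f ∘ Ψ) ∈ 𝓝 (Φ.symm (f (Ψ z))) :=
    range_mem_nhds_of_notMem_diskBoundary (by fun_prop)
      (Φ.symm.injective.comp (hinj.comp Ψ.injective)) hz
  rw [Set.range_comp, Ψ.surjective.range_comp] at hrange
  exact Φ.symm.isOpenEmbedding.image_mem_nhds.1 hrange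

theorem frontier_range_subset_image_diskBoundary (Φ : closedBall (0 : ℂ) 1 ≃ₜ Y)
    (Ψ : closedBall (0 : ℂ) 1 ≃ₜ X) (hf : Continuous f) (hinj : Function.Injective f) :
    frontier (Set.range f) ⊆ f '' (Ψ '' diskBoundary) := by
  have : CompactSpace X := Ψ.compactSpace
  have : T2Space Y := Φ.t2Space
  intro y hy
  obtain ⟨x, rfl⟩ := (isCompact_range hf).isClosed.frontier_subset hy
  refine Set.mem_image_of_mem f (not_not.1 fun hx ↦ hy.2 ?_)
  exact mem_interior_iff_mem_nhds.2
    (range_mem_nhds_of_notMem_image_diskBoundary Φ Ψ hf hinj hx)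

end DiskBoundary

theorem nonempty_inter_frontier_of_isPreconnected {X : Type*} [TopologicalSpace X] {s t : Set X}
    (hs : IsPreconnected s) (hst : (s ∩ t).Nonempty) (hst' : (s ∩ tᶜ).Nonempty) :
    (s ∩ frontier t).Nonempty := by
  by_contra hempty
  have hcover : s ⊆ interior t ∪ interior tᶜ := by
    rw [← compl_frontier_eq_union_interior]
    exact fun x hx hxt ↦ hempty ⟨x, hx, hxt⟩
  obtain ⟨x, -, hxt, hxt'⟩ := hs _ _ isOpen_interior isOpen_interior hcover
    (hst.mono fun x hx ↦ ⟨hx.1, (hcover hx.1).resolve_right fun h ↦ interior_subset h hx.2⟩)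
    (hst'.mono fun x hx ↦ ⟨hx.1, (hcover hx.1).resolve_left fun h ↦ hx.2 (interior_subset h)⟩)
  exact interior_subset hxt' (interior_subset hxt)

theorem IsLengthSpace.isPreconnected_ball {X : Type*} [MetricSpace X] (hX : IsLengthSpace X)
    (p : X) (ε : ℝ) : IsPreconnected (ball p ε) := by
  refine isPreconnected_of_forall p fun q hq ↦ ?_
  rw [← eball_ofReal] at hq ⊢
  have hlt : edist p q < ENNReal.ofReal ε := mem_eball'.1 hq
  rw [hX p q, iInf_lt_iff] at hlt
  obtain ⟨⟨γ, rfl, rfl⟩, hγ⟩ := hlt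
  have ha : γ.a ∈ Set.Icc γ.a γ.b := Set.left_mem_Icc.2 γ.hab
  refine ⟨γ.toFun '' Set.Icc γ.a γ.b, ?_, Set.mem_image_of_mem _ ha,
    Set.mem_image_of_mem _ (Set.right_mem_Icc.2 γ.hab), isPreconnected_Icc.image _ γ.cont⟩
  rintro _ ⟨t, ht, rfl⟩
  exact mem_eball'.2 ((eVariationOn.edist_le γ.toFun ha ht).trans_lt hγ)

section BoundaryDiam

variable {X Y : Type*} [MetricSpace Y] (Φ : closedBall (0 : ℂ) 1 ≃ₜ Y) {f : X → Y} {ε : ℝ}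

theorem image_diskBoundary_inter_thickening_subset [TopologicalSpace X] (hY : IsLengthSpace Y)
    (Ψ : closedBall (0 : ℂ) 1 ≃ₜ X) (hf : Continuous f) (hinj : Function.Injective f) :
    Φ '' diskBoundary ∩ thickening ε (Set.range f) ⊆ thickening ε (f '' (Ψ '' diskBoundary)) := by
  rintro p ⟨hp, hpf⟩
  obtain ⟨_, ⟨x, rfl⟩, hx⟩ := mem_thickening_iff.1 hpf
  have hε : 0 < ε := dist_nonneg.trans_lt hx
  by_cases hpr : p ∈ Set.range f
  · obtain ⟨x', rfl⟩ := hpr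
    exact self_subset_thickening hε _
      (Set.mem_image_of_mem f (mem_image_diskBoundary_of_map_mem Φ Ψ hf hinj hp))
  · obtain ⟨y, hyp, hyf⟩ := nonempty_inter_frontier_of_isPreconnected (hY.isPreconnected_ball p ε)
      ⟨f x, mem_ball'.2 hx, Set.mem_range_self x⟩ ⟨p, mem_ball_self hε, hpr⟩
    exact mem_thickening_iff.2
      ⟨y, frontier_range_subset_image_diskBoundary Φ Ψ hf hinj hyf, mem_ball'.1 hyp⟩

theorem IsEpsIsometry.ediam_image_le [MetricSpace X] (hf : IsEpsIsometry ε f) (s : Set X) :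
    ediam (f '' s) ≤ ediam s + ENNReal.ofReal ε := by
  refine ediam_image_le_iff.2 fun x hx y hy ↦ ?_
  have hdist : dist (f x) (f y) ≤ dist x y + ε := by linarith [(abs_lt.1 (hf.2 x y)).1]
  calc edist (f x) (f y) ≤ ENNReal.ofReal (dist x y + ε) := by
        rw [edist_dist]; gcongr
    _ ≤ edist x y + ENNReal.ofReal ε := by
        rw [edist_dist]; exact ENNReal.ofReal_add_le
    _ ≤ ediam s + ENNReal.ofReal ε := by
        gcongr; exact edist_le_ediam_of_mem hx hy

theorem IsEpsIsometry.ediam_image_diskBoundary_le [MetricSpace X] (hf : IsEpsIsometry ε f)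
    (hY : IsLengthSpace Y) (Ψ : closedBall (0 : ℂ) 1 ≃ₜ X) (hcont : Continuous f)
    (hinj : Function.Injective f) :
    ediam (Φ '' diskBoundary) ≤ ediam (Ψ '' diskBoundary) + 3 * ENNReal.ofReal ε := by
  have hsub : Φ '' diskBoundary ⊆ thickening ε (f '' (Ψ '' diskBoundary)) := fun p hp ↦ by
    obtain ⟨x, hx⟩ := hf.1 p
    exact image_diskBoundary_inter_thickening_subset Φ hY Ψ hcont hinj
      ⟨hp, mem_thickening_iff.2 ⟨f x, Set.mem_range_self x, hx⟩⟩
  calc ediam (Φ '' diskBoundary)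
      ≤ ediam (thickening ε.toNNReal (f '' (Ψ '' diskBoundary))) :=
        ediam_mono (hsub.trans (thickening_mono (Real.le_coe_toNNReal ε) _))
    _ ≤ ediam (f '' (Ψ '' diskBoundary)) + 2 * ENNReal.ofReal ε := ediam_thickening_le _
    _ ≤ ediam (Ψ '' diskBoundary) + ENNReal.ofReal ε + 2 * ENNReal.ofReal ε := by
        gcongr; exact hf.ediam_image_le _
    _ = ediam (Ψ '' diskBoundary) + 3 * ENNReal.ofReal ε := by ring

end BoundaryDiam

theorem liminf_boundary_diam_general {ι : Type*} {l : Filter ι}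
    {X : ι → Type*} [∀ i, MetricSpace (X i)] {Y : Type*} [MetricSpace Y] (hY : IsLengthSpace Y)
    (Φ : closedBall (0 : ℂ) 1 ≃ₜ Y) (Ψ : ∀ i, closedBall (0 : ℂ) 1 ≃ₜ X i)
    (f : ∀ i, X i → Y) {ε : ι → ℝ} (hε : Tendsto ε l (𝓝 0))
    (hf : ∀ i, IsEpsIsometry (ε i) (f i)) (hcont : ∀ i, Continuous (f i))
    (hinj : ∀ i, Function.Injective (f i)) :
    ediam (Φ '' diskBoundary) ≤ liminf (fun i ↦ ediam (Ψ i '' diskBoundary)) l := by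
  refine (le_liminf_iff).2 fun a ha ↦ ?_
  have hlim : Tendsto (fun i ↦ a + 3 * ENNReal.ofReal (ε i)) l (𝓝 a) := by
    simpa using tendsto_const_nhds.add
      (ENNReal.Tendsto.const_mul (ENNReal.tendsto_ofReal hε) (Or.inr ENNReal.ofNat_ne_top))
  filter_upwards [hlim.eventually_lt_const ha] with i hi
  exact lt_of_add_lt_add_right
    (hi.trans_le ((hf i).ediam_image_diskBoundary_le Φ hY (Ψ i) (hcont i) (hinj i)))

theorem liminf_boundary_diam
    (X : ℕ → Type) [∀ n, MetricSpace (X n)] (hXlen : ∀ n, IsLengthSpace (X n))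
    (Y : Type) [MetricSpace Y] (hYlen : IsLengthSpace Y)
    -- `Y` is homeomorphic to a closed topological disk, and each `Xₙ` is homeomorphic
    -- to `Y` (hence also to the closed disk):
    (Φ : ↥(Metric.closedBall (0 : ℂ) 1) ≃ₜ Y)
    (Φn : ∀ n, ↥(Metric.closedBall (0 : ℂ) 1) ≃ₜ X n)
    -- an approximately isometric sequence of topological embeddings `fₙ : Xₙ → Y`:
    (f : ∀ n, X n → Y) (ε : ℕ → ℝ) (hε : ∀ n, 0 < ε n) (hε0 : Tendsto ε atTop (𝓝 0))
    (hf : ∀ n, IsEpsIsometry (ε n) (f n))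
    (hemb : ∀ n, Topology.IsEmbedding (f n)) :
    EMetric.diam (Φ '' diskBoundary) ≤
      liminf (fun n => EMetric.diam (Φn n '' diskBoundary)) atTop :=
  liminf_boundary_diam_general hYlen Φ Φn f hε0 hf (fun n ↦ (hemb n).continuous)
    fun n ↦ (hemb n).injective
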